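/- arXiv:2301.09104 — 3 statements merged into one kernel-verified Lean document; each statement's English description precedes it below -/
import Mathlib

section
/- The sequence 𝒜 = (x_{v_0} − x_{i_2}, x_{v_1} − x_{i_3}, …, x_{v_{k−2}} − x_{i_k}, x_{s_1} − x_{i_{k−1}}, x_{s_2} − x_{i_1}) is a regular sequence on S/M_{Π,M} and also a regular sequence on S/I_{Π,M}. -/
noncomputable section

open MvPolynomial

/-- Variable type of `S = K[x_1,…,x_{n+1}, x_{v_0},…,x_{v_{k-2}}, x_{s_1}, x_{s_2}]`,
a polynomial ring in `n + k + 2` variables. -/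
abbrev SVar (n k : ℕ) := Fin (n + 1) ⊕ (Fin (k - 1) ⊕ Fin 2)

/-- The variable `x_j` of `S` (`1 ≤ j ≤ n + 1`). -/
def xvS (n k : ℕ) (j : ℕ) : SVar n k :=
  Sum.inl ⟨(j - 1) % (n + 1), Nat.mod_lt _ (Nat.succ_pos n)⟩

/-- The variable `x_{v_j}` of `S` (`0 ≤ j ≤ k - 2`). -/
def vvS (n k : ℕ) (j : ℕ) : SVar n k :=
  if h : j < k - 1 then Sum.inr (Sum.inl ⟨j, h⟩) else Sum.inl ⟨0, Nat.succ_pos n⟩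

/-- The variable `x_{s_1}` of `S`. -/
def s1S (n k : ℕ) : SVar n k := Sum.inr (Sum.inr 0)

/-- The variable `x_{s_2}` of `S`. -/
def s2S (n k : ℕ) : SVar n k := Sum.inr (Sum.inr 1)

/-- `as` is a regular sequence on the module `R/N`:  each `as_j` is a nonzerodivisor on
`R/(N + (as_0, …, as_{j-1}))` and `R/(N + (as))` is nonzero. -/
def IsRegSeqOnQuot (R : Type*) [CommRing R] (as : List R) (N : Ideal R) : Prop :=
  (∀ (j : ℕ) (hj : j < as.length) (f : R),
      as.get ⟨j, hj⟩ * f ∈ N ⊔ Ideal.span {a | a ∈ as.take j} →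
      f ∈ N ⊔ Ideal.span {a | a ∈ as.take j}) ∧
  N ⊔ Ideal.span {a | a ∈ as} ≠ ⊤

/-! Give `x_j` the position `j` and each further variable the position of the `x_j` it gets
identified with. Then the top entry of every column lies one position above the bottom entry, and
distinct columns have distinct positions. Dividing by some of the differences in `𝒜` amounts to
substituting variables in the matrix, which preserves positions, so it suffices to see that `y - x`
is regular on the quotient for such a matrix whenever `x ≠ y` have the same position.

The minors generate the toric ideal of the weights `v ↦ x_a * z ^ p`, with `a` the chain (block) and
`p` the position of `v`; variables of equal position lie in different chains, so `y - x` maps to the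
nonzerodivisor `(x_a - x_b) * z ^ p`. The anti-diagonal products generate a monomial ideal, where it
is enough that a monomial `u` lies in the ideal as soon as `x * u` and `y * u` do; this follows from
the order of the blocks. -/

section MonomialIdeals

variable {V R : Type*} [CommRing R] {x y : V} {M : Set (V →₀ ℕ)} {f : MvPolynomial V R}

theorem exists_coeff_ne_zero_of_X_sub_X_mul_mem (hM : IsUpperSet M) (hxy : x ≠ y)
    (hf : (X y - X x) * f ∈ restrictSupportIdeal R M hM) {u : V →₀ ℕ}
    (hu : u + Finsupp.single y 1 ∉ M) (hfu : coeff u f ≠ 0) :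
    ∃ v, u = v + Finsupp.single x 1 ∧ coeff (v + Finsupp.single y 1) f ≠ 0 := by
  classical
  have hcoeff : coeff (u + Finsupp.single y 1) ((X y - X x) * f) = 0 := by
    by_contra h
    exact hu (hf (mem_support_iff.2 h))
  rw [sub_mul, coeff_sub, add_comm u, coeff_X_mul, coeff_X_mul'] at hcoeff
  split_ifs at hcoeff with hx
  · have hux : Finsupp.single x 1 ≤ u := by
      simpa [Finsupp.single_apply, hxy.symm, Nat.one_le_iff_ne_zero] using hx
    obtain ⟨v, rfl⟩ := exists_add_of_le hux
    rw [add_left_comm, add_tsub_cancel_left, sub_eq_zero] at hcoeff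
    exact ⟨v, add_comm _ _, by rwa [add_comm, ← hcoeff]⟩
  · exact absurd (by simpa using hcoeff) hfu

theorem coeff_eq_zero_of_forall_add_nsmul_notMem (hM : IsUpperSet M) (hxy : x ≠ y)
    (hf : (X y - X x) * f ∈ restrictSupportIdeal R M hM) {u : V →₀ ℕ}
    (hu : ∀ p : ℕ, u + p • Finsupp.single y 1 ∉ M) : coeff u f = 0 := by
  induction hd : u x generalizing u with
  | zero =>
    by_contra hfu
    obtain ⟨v, rfl, -⟩ :=
      exists_coeff_ne_zero_of_X_sub_X_mul_mem hM hxy hf (by simpa using hu 1) hfu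
    simp at hd
  | succ d ih =>
    by_contra hfu
    obtain ⟨v, rfl, hv⟩ :=
      exists_coeff_ne_zero_of_X_sub_X_mul_mem hM hxy hf (by simpa using hu 1) hfu
    refine hv (ih (fun p hp => hu (p + 1) (hM ?_ hp)) ?_)
    · rw [add_right_comm v (Finsupp.single x 1), succ_nsmul', ← add_assoc]
      exact le_self_add
    · simpa [hxy.symm] using hd

/- A monomial ideal `I` has `X y - X x` as a zero divisor only if both variables lie in an
associated prime `I : u`, which is what the hypothesis forbids. -/
theorem isSMulRegular_X_sub_X_quotient_restrictSupportIdeal (hM : IsUpperSet M) (hxy : x ≠ y)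
    (h : ∀ u, u + Finsupp.single x 1 ∈ M → u + Finsupp.single y 1 ∈ M → u ∈ M) :
    IsSMulRegular (MvPolynomial V R ⧸ restrictSupportIdeal R M hM)
      (X y - X x : MvPolynomial V R) := by
  classical
  rw [isSMulRegular_quotient_iff_mem_of_smul_mem]
  intro f hf u hu
  rw [smul_eq_mul] at hf
  by_contra huM
  obtain ⟨w, hw, hmax⟩ := Finset.exists_max_image {w ∈ f.support | w ∉ M} (fun w => w x)
    ⟨u, Finset.mem_filter.2 ⟨hu, huM⟩⟩
  obtain ⟨hwf, hwM⟩ := Finset.mem_filter.1 hw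
  have hwx : w + Finsupp.single x 1 ∈ M := by
    by_contra hwx
    obtain ⟨v, rfl, hv⟩ := exists_coeff_ne_zero_of_X_sub_X_mul_mem hM hxy.symm
      (by simpa [← neg_mul] using neg_mem hf) hwx (mem_support_iff.1 hwf)
    have hvM : v + Finsupp.single x 1 ∉ M := fun hvM =>
      hwx (hM (by rw [add_right_comm]; exact le_self_add) hvM)
    simpa [hxy.symm] using hmax _ (Finset.mem_filter.2 ⟨mem_support_iff.2 hv, hvM⟩)
  have hwy : ∀ p : ℕ, w + p • Finsupp.single y 1 ∉ M := by
    intro p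
    induction p with
    | zero => simpa using hwM
    | succ p ih =>
      intro hp
      refine ih (h _ (hM ?_ hwx) (by rwa [add_assoc, ← succ_nsmul]))
      rw [add_right_comm]
      exact le_self_add
  exact mem_support_iff.1 hwf (coeff_eq_zero_of_forall_add_nsmul_notMem hM hxy hf hwy)

theorem isSMulRegular_X_sub_X (hxy : x ≠ y) :
    IsSMulRegular (MvPolynomial V R) (X y - X x : MvPolynomial V R) := by
  have hreg := isSMulRegular_X_sub_X_quotient_restrictSupportIdeal (R := R)
    (isUpperSet_empty (α := V →₀ ℕ)) hxy (by simp)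
  rw [isSMulRegular_quotient_iff_mem_of_smul_mem] at hreg
  refine isSMulRegular_iff_right_eq_zero_of_smul.2 fun f hf => ?_
  have hsupp : (f.support : Set (V →₀ ℕ)) ⊆ ∅ := hreg f (by rw [hf]; exact zero_mem _)
  simpa using hsupp

end MonomialIdeals

section TwoRowIdeals

variable {V C : Type*}

/-- The ideal of `2 × 2` minors of the matrix of variables with top row `t` and bottom row `b`. -/
def minorIdeal (R : Type*) [CommRing R] [LT C] (t b : C → V) : Ideal (MvPolynomial V R) :=
  Ideal.span {f | ∃ c₁ c₂, c₁ < c₂ ∧ f = X (t c₁) * X (b c₂) - X (t c₂) * X (b c₁)}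

/-- The ideal of anti-diagonal products of the `2 × 2` minors of the matrix of variables with top
row `t` and bottom row `b`. -/
def antidiagonalIdeal (R : Type*) [CommRing R] [LT C] (t b : C → V) : Ideal (MvPolynomial V R) :=
  Ideal.span {f | ∃ c₁ c₂, c₁ < c₂ ∧ f = X (b c₁) * X (t c₂)}

variable {R : Type*} [CommRing R] {t b : C → V}

theorem minorIdeal_map_rename [LT C] (σ : V → V) :
    (minorIdeal R t b).map (rename σ) = minorIdeal R (σ ∘ t) (σ ∘ b) := by
  rw [minorIdeal, minorIdeal, Ideal.map_span]
  congr 1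
  ext f
  constructor
  · rintro ⟨_, ⟨c₁, c₂, h, rfl⟩, rfl⟩
    exact ⟨c₁, c₂, h, by simp⟩
  · rintro ⟨c₁, c₂, h, rfl⟩
    exact ⟨_, ⟨c₁, c₂, h, rfl⟩, by simp⟩

theorem antidiagonalIdeal_map_rename [LT C] (σ : V → V) :
    (antidiagonalIdeal R t b).map (rename σ) = antidiagonalIdeal R (σ ∘ t) (σ ∘ b) := by
  rw [antidiagonalIdeal, antidiagonalIdeal, Ideal.map_span]
  congr 1
  ext f
  constructor
  · rintro ⟨_, ⟨c₁, c₂, h, rfl⟩, rfl⟩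
    exact ⟨c₁, c₂, h, by simp⟩
  · rintro ⟨c₁, c₂, h, rfl⟩
    exact ⟨_, ⟨c₁, c₂, h, rfl⟩, by simp⟩

theorem minorIdeal_le_ker_constantCoeff [LT C] :
    minorIdeal R t b ≤ RingHom.ker constantCoeff := by
  rw [minorIdeal, Ideal.span_le]
  rintro _ ⟨c₁, c₂, -, rfl⟩
  simp [RingHom.mem_ker]

theorem antidiagonalIdeal_le_ker_constantCoeff [LT C] :
    antidiagonalIdeal R t b ≤ RingHom.ker constantCoeff := by
  rw [antidiagonalIdeal, Ideal.span_le]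
  rintro _ ⟨c₁, c₂, -, rfl⟩
  simp [RingHom.mem_ker]

theorem isUpperSet_antidiagonal_exponents [LT C] (t b : C → V) :
    IsUpperSet {u : V →₀ ℕ |
      ∃ c₁ c₂, c₁ < c₂ ∧ Finsupp.single (b c₁) 1 + Finsupp.single (t c₂) 1 ≤ u} :=
  fun _ _ huw ⟨c₁, c₂, hc, hu⟩ => ⟨c₁, c₂, hc, hu.trans huw⟩

theorem antidiagonalIdeal_eq_restrictSupportIdeal [LT C] :
    antidiagonalIdeal R t b =
      restrictSupportIdeal R _ (isUpperSet_antidiagonal_exponents t b) := by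
  have hgen : {f : MvPolynomial V R | ∃ c₁ c₂, c₁ < c₂ ∧ f = X (b c₁) * X (t c₂)} =
      (fun s => monomial s 1) '' {s | ∃ c₁ c₂, c₁ < c₂ ∧
        Finsupp.single (b c₁) 1 + Finsupp.single (t c₂) 1 = s} := by
    ext f
    constructor
    · rintro ⟨c₁, c₂, h, rfl⟩
      exact ⟨_, ⟨c₁, c₂, h, rfl⟩, by simp [X, monomial_mul]⟩
    · rintro ⟨_, ⟨c₁, c₂, h, rfl⟩, rfl⟩
      exact ⟨c₁, c₂, h, by simp [X, monomial_mul]⟩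
  ext f
  rw [antidiagonalIdeal, hgen, mem_ideal_span_monomial_image]
  refine forall₂_congr fun u _ => ⟨?_, ?_⟩
  · rintro ⟨_, ⟨c₁, c₂, hc, rfl⟩, hu⟩
    exact ⟨c₁, c₂, hc, hu⟩
  · rintro ⟨c₁, c₂, hc, hu⟩
    exact ⟨_, ⟨c₁, c₂, hc, rfl⟩, hu⟩

theorem single_add_single_le_of_le_add_single {p q z : V} {u : V →₀ ℕ}
    (h : Finsupp.single p 1 + Finsupp.single q 1 ≤ u + Finsupp.single z 1)
    (hp : p ≠ z) (hq : q ≠ z) : Finsupp.single p 1 + Finsupp.single q 1 ≤ u := by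
  classical
  intro v
  rcases eq_or_ne v z with rfl | hv
  · simp [hp, hq]
  · simpa [hv] using h v

theorem single_add_single_le_of_ne {p q : V} {u : V →₀ ℕ} (hpq : p ≠ q)
    (hp : Finsupp.single p 1 ≤ u) (hq : Finsupp.single q 1 ≤ u) :
    Finsupp.single p 1 + Finsupp.single q 1 ≤ u := by
  classical
  intro v
  rcases eq_or_ne v p with rfl | hv
  · simpa [hpq] using hp v
  · simpa [hv] using hq v

theorem isSMulRegular_X_sub_X_quotient_antidiagonalIdeal [LinearOrder C] {pos : V → ℕ}
    (htop : ∀ c, pos (t c) = pos (b c) + 1) (hinj : Function.Injective (pos ∘ b))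
    {x y : V} (hxy : x ≠ y) (hpos : pos x = pos y) (hyb : ∀ c, b c = y → IsMax c)
    (hyt : ∀ c, t c = y → ∀ c₁ < c, ∀ c₂ ≥ c, pos (b c₁) < pos (b c₂)) :
    IsSMulRegular (MvPolynomial V R ⧸ antidiagonalIdeal R t b)
      (X y - X x : MvPolynomial V R) := by
  rw [antidiagonalIdeal_eq_restrictSupportIdeal]
  refine isSMulRegular_X_sub_X_quotient_restrictSupportIdeal _ hxy ?_
  rintro u ⟨c₃, c₄, h₃₄, hux⟩ ⟨c₁, c₂, h₁₂, huy⟩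
  have hb₁ : b c₁ ≠ y := fun h => (hyb c₁ h).not_lt h₁₂
  by_cases ht₂ : t c₂ = y
  swap
  · exact ⟨c₁, c₂, h₁₂, single_add_single_le_of_le_add_single huy hb₁ ht₂⟩
  have hpos₂ : pos (b c₂) + 1 = pos x := by rw [← htop, ht₂, hpos]
  have ht₄ : t c₄ ≠ x := by
    intro h
    have h₄₂ : c₄ = c₂ := hinj (by have := htop c₄; simp only [Function.comp_apply]; grind)
    exact hxy (by rw [← h, h₄₂, ht₂])
  by_cases hb₃ : b c₃ = x
  swap
  · exact ⟨c₃, c₄, h₃₄, single_add_single_le_of_le_add_single hux hb₃ ht₄⟩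
  have h₂₃ : c₂ ≤ c₃ := by
    by_contra! h
    have := hyt c₂ ht₂ c₃ h c₂ le_rfl
    grind
  have h₁₄ : pos (b c₁) < pos (b c₄) := hyt c₂ ht₂ c₁ h₁₂ c₄ (h₂₃.trans h₃₄.le)
  refine ⟨c₁, c₄, h₁₂.trans_le (h₂₃.trans h₃₄.le), single_add_single_le_of_ne ?_ ?_ ?_⟩
  · intro h
    have := htop c₄
    grind
  · rwa [ht₂, add_le_add_iff_right] at huy
  · rwa [hb₃, add_comm, add_le_add_iff_right] at hux

end TwoRowIdeals

section ToricIdeals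

variable {V W : Type*} (R : Type*) [CommRing R]

/-- The monomial map sending the variable `v` to the monomial with exponent `g v`; its kernel is the
toric ideal of the weights `g`. -/
def toricMap (g : V → W →₀ ℕ) : MvPolynomial V R →ₐ[R] MvPolynomial W R :=
  aeval fun v => monomial (g v) 1

variable {R}

theorem toricMap_X (g : V → W →₀ ℕ) (v : V) :
    toricMap R g (X v) = monomial (g v) 1 := by
  rw [toricMap, aeval_X]

theorem toricMap_monomial_one (g : V → W →₀ ℕ) (u : V →₀ ℕ) :
    toricMap R g (monomial u 1) = monomial (Finsupp.linearCombination ℕ g u) 1 := by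
  rw [toricMap, aeval_monomial, map_one, one_mul, Finsupp.linearCombination_apply,
    monomial_finsupp_sum_index]
  simp only [monomial_pow, one_pow, C_1, one_mul]

variable {g : V → W →₀ ℕ} {I : Ideal (MvPolynomial V R)}

/- The quotient map by `I` factors through `toricMap R g` as a linear map, since it is constant on
the monomials with a given image. -/
theorem ker_toricMap_le
    (hI : ∀ u w, Finsupp.linearCombination ℕ g u = Finsupp.linearCombination ℕ g w →
      Ideal.Quotient.mk I (monomial u 1) = Ideal.Quotient.mk I (monomial w 1)) :
    RingHom.ker (toricMap R g) ≤ I := by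
  classical
  let e := Finsupp.linearCombination ℕ g
  let ψ : MvPolynomial W R →ₗ[R] MvPolynomial V R ⧸ I := (basisMonomials W R).constr R fun s =>
    if h : ∃ u, e u = s then Ideal.Quotient.mk I (monomial h.choose 1) else 0
  have hψ : ψ ∘ₗ (toricMap R g).toLinearMap = (Ideal.Quotient.mkₐ R I).toLinearMap := by
    refine (basisMonomials V R).ext fun u => ?_
    have hu : ∃ w, e w = e u := ⟨u, rfl⟩
    simp only [coe_basisMonomials, LinearMap.comp_apply, AlgHom.toLinearMap_apply,
      toricMap_monomial_one]
    rw [← congrFun (coe_basisMonomials W R) (e u), Module.Basis.constr_basis, dif_pos hu]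
    exact hI _ _ hu.choose_spec
  intro f hf
  have hf' := LinearMap.congr_fun hψ f
  rw [LinearMap.comp_apply, AlgHom.toLinearMap_apply, RingHom.mem_ker.1 hf, map_zero] at hf'
  exact Ideal.Quotient.eq_zero_iff_mem.1 hf'.symm

theorem isSMulRegular_quotient_of_toricMap (hker : I ≤ RingHom.ker (toricMap R g))
    (hI : ∀ u w, Finsupp.linearCombination ℕ g u = Finsupp.linearCombination ℕ g w →
      Ideal.Quotient.mk I (monomial u 1) = Ideal.Quotient.mk I (monomial w 1))
    {a : MvPolynomial V R} (ha : IsSMulRegular (MvPolynomial W R) (toricMap R g a)) :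
    IsSMulRegular (MvPolynomial V R ⧸ I) a := by
  rw [isSMulRegular_quotient_iff_mem_of_smul_mem]
  intro f hf
  refine ker_toricMap_le hI (RingHom.mem_ker.2 (isSMulRegular_iff_right_eq_zero_of_smul.1 ha _ ?_))
  have haf := RingHom.mem_ker.1 (hker hf)
  rwa [smul_eq_mul, map_mul] at haf

theorem mk_monomial_one_eq_prod (u : V →₀ ℕ) :
    Ideal.Quotient.mk I (monomial u 1) =
      ((Finsupp.toMultiset u).map fun v => Ideal.Quotient.mk I (X v)).prod := by
  induction u using Finsupp.induction_linear with
  | zero => simp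
  | add u w hu hw =>
    rw [← one_mul (1 : R), ← monomial_mul, map_mul, hu, hw, map_add, Multiset.map_add,
      Multiset.prod_add]
  | single v m => simp [Multiset.map_nsmul, Multiset.prod_nsmul, ← X_pow_eq_monomial]

end ToricIdeals

section Chains

variable {V C : Type*} {t b : C → V}

/-- The step from the bottom entry of a column to its top entry. -/
def ColumnStep (t b : C → V) (v w : V) : Prop := ∃ c, b c = v ∧ t c = w

/-- The chain of an entry, a maximal sequence of entries linked by column steps: these are the
blocks of the matrix with top row `t` and bottom row `b`. -/
def chain (t b : C → V) : V → Quot (ColumnStep t b) := Quot.mk _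

theorem chain_top (c : C) : chain t b (t c) = chain t b (b c) :=
  (Quot.sound ⟨c, rfl, rfl⟩).symm

theorem reflTransGen_columnStep_total (ht : Function.Injective t) (hb : Function.Injective b)
    {v w : V} (h : chain t b v = chain t b w) :
    Relation.ReflTransGen (ColumnStep t b) v w ∨ Relation.ReflTransGen (ColumnStep t b) w v := by
  have hfwd : Relator.RightUnique (ColumnStep t b) := by
    rintro _ _ _ ⟨c, rfl, rfl⟩ ⟨c', h, rfl⟩
    rw [hb h]
  have hbwd : Relator.RightUnique (Function.swap (ColumnStep t b)) := by
    rintro _ _ _ ⟨c, rfl, rfl⟩ ⟨c', rfl, h⟩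
    rw [ht h]
  replace h := Quot.eqvGen_exact h
  induction h with
  | rel v w h => exact .inl (.single h)
  | refl v => exact .inl .refl
  | symm v w _ ih => exact ih.symm
  | trans u v w _ _ ihuv ihvw =>
    rcases ihuv, ihvw with ⟨huv | hvu, hvw | hwv⟩
    · exact .inl (huv.trans hvw)
    · rw [← Relation.reflTransGen_swap] at huv hwv
      rw [← Relation.reflTransGen_swap (a := u), ← Relation.reflTransGen_swap (a := w)]
      exact (Relation.ReflTransGen.total_of_right_unique hbwd huv hwv).symm
    · exact Relation.ReflTransGen.total_of_right_unique hfwd hvu hvw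
    · exact .inr (hwv.trans hvu)

variable {pos : V → ℕ}

theorem pos_le_of_reflTransGen_columnStep (htop : ∀ c, pos (t c) = pos (b c) + 1) {v w : V}
    (h : Relation.ReflTransGen (ColumnStep t b) v w) : pos v ≤ pos w := by
  induction h with
  | refl => rfl
  | tail _ h ih =>
    obtain ⟨c, rfl, rfl⟩ := h
    exact ih.trans ((htop c).symm ▸ Nat.le_succ _)

theorem eq_of_chain_eq_of_pos_eq (ht : Function.Injective t) (hb : Function.Injective b)
    (htop : ∀ c, pos (t c) = pos (b c) + 1) {v w : V} (h : chain t b v = chain t b w)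
    (hpos : pos v = pos w) : v = w := by
  have key : ∀ {v w}, pos v = pos w → Relation.ReflTransGen (ColumnStep t b) v w → v = w := by
    intro v w hpos h
    rcases h.cases_head with rfl | ⟨_, ⟨c, rfl, rfl⟩, h⟩
    · rfl
    · have := pos_le_of_reflTransGen_columnStep htop h
      have := htop c
      omega
  rcases reflTransGen_columnStep_total ht hb h with h | h
  · exact key hpos h
  · exact (key hpos.symm h).symm

theorem exists_columns_of_chain_eq_of_pos_lt (ht : Function.Injective t) (hb : Function.Injective b)
    (htop : ∀ c, pos (t c) = pos (b c) + 1) {v w : V} (h : chain t b v = chain t b w)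
    (hpos : pos v < pos w) : (∃ c, b c = v) ∧ ∃ c, t c = w := by
  rcases reflTransGen_columnStep_total ht hb h with h | h
  · constructor
    · rcases h.cases_head with rfl | ⟨_, ⟨c, hc, -⟩, -⟩
      exacts [absurd hpos (lt_irrefl _), ⟨c, hc⟩]
    · rcases h.cases_tail with rfl | ⟨_, -, ⟨c, -, hc⟩⟩
      exacts [absurd hpos (lt_irrefl _), ⟨c, hc⟩]
  · exact absurd (pos_le_of_reflTransGen_columnStep htop h) hpos.not_ge

theorem exists_pairs_of_rel {α β : Type*} {r : α → β → Prop} {U : Multiset α} {W : Multiset β}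
    (h : Multiset.Rel r U W) :
    ∃ P : Multiset (α × β), P.map Prod.fst = U ∧ P.map Prod.snd = W ∧ ∀ p ∈ P, r p.1 p.2 := by
  induction h with
  | zero => exact ⟨0, by simp⟩
  | @cons v w U W hvw _ ih =>
    obtain ⟨P, rfl, rfl, hP⟩ := ih
    exact ⟨(v, w) ::ₘ P, by simp, by simp, by simpa using ⟨hvw, fun v w h => hP (v, w) h⟩⟩

theorem exists_lt_of_sum_map_eq {α : Type*} {f g : α → ℕ} {P : Multiset α}
    (h : (P.map f).sum = (P.map g).sum) (hlt : ∃ p ∈ P, f p < g p) : ∃ q ∈ P, g q < f q := by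
  by_contra! hle
  exact h.not_lt (Multiset.sum_lt_sum hle hlt)

/- Whenever some pair has to climb its chain and another one to descend, one relation
`z (b c₁) * z (t c₂) = z (t c₁) * z (b c₂)` moves both one step closer. -/
theorem prod_map_fst_eq_prod_map_snd (ht : Function.Injective t) (hb : Function.Injective b)
    (htop : ∀ c, pos (t c) = pos (b c) + 1) {Q : Type*} [CommMonoid Q] {z : V → Q}
    (hz : ∀ c₁ c₂, z (b c₁) * z (t c₂) = z (t c₁) * z (b c₂)) (P : Multiset (V × V))
    (hP : ∀ p ∈ P, chain t b p.1 = chain t b p.2)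
    (hpos : (P.map fun p => pos p.1).sum = (P.map fun p => pos p.2).sum) :
    (P.map fun p => z p.1).prod = (P.map fun p => z p.2).prod := by
  classical
  induction hd : (P.map fun p => pos p.2 - pos p.1).sum using Nat.strong_induction_on
    generalizing P with
  | _ d ih =>
  by_cases! hle : ∀ p ∈ P, pos p.2 ≤ pos p.1
  · have hge : ∀ p ∈ P, pos p.1 ≤ pos p.2 := by
      by_contra! hlt
      obtain ⟨p, hp, hpos'⟩ := exists_lt_of_sum_map_eq hpos.symm hlt
      exact (hle p hp).not_gt hpos'
    refine congrArg _ (Multiset.map_congr rfl fun p hp => congrArg z ?_)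
    exact eq_of_chain_eq_of_pos_eq ht hb htop (hP p hp) ((hge p hp).antisymm (hle p hp))
  obtain ⟨p, hp, hlt⟩ := hle
  obtain ⟨q, hq, hgt⟩ := exists_lt_of_sum_map_eq hpos ⟨p, hp, hlt⟩
  obtain ⟨P, rfl⟩ := Multiset.exists_cons_of_mem hp
  have hqp : q ≠ p := by
    rintro rfl
    exact hlt.not_gt hgt
  obtain ⟨P, rfl⟩ := Multiset.exists_cons_of_mem ((Multiset.mem_cons.1 hq).resolve_left hqp)
  obtain ⟨p₁, p₂⟩ := p
  obtain ⟨q₁, q₂⟩ := q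
  simp only [Multiset.mem_cons, forall_eq_or_imp, Multiset.map_cons, Multiset.sum_cons,
    Multiset.prod_cons] at hP hpos hd hlt hgt ⊢
  obtain ⟨⟨c₁, rfl⟩, -⟩ := exists_columns_of_chain_eq_of_pos_lt ht hb htop hP.1 hlt
  obtain ⟨-, ⟨c₂, rfl⟩⟩ := exists_columns_of_chain_eq_of_pos_lt ht hb htop hP.2.1.symm hgt
  have h₁ := htop c₁
  have h₂ := htop c₂
  have hP' : ∀ p ∈ (t c₁, p₂) ::ₘ (b c₂, q₂) ::ₘ P, chain t b p.1 = chain t b p.2 := by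
    simp only [Multiset.mem_cons, forall_eq_or_imp]
    exact ⟨(chain_top c₁).trans hP.1, (chain_top c₂).symm.trans hP.2.1, hP.2.2⟩
  have hprod := ih _ ?_ _ hP' ?_ rfl
  · simp only [Multiset.map_cons, Multiset.prod_cons] at hprod
    rw [← mul_assoc, hz, mul_assoc, hprod]
  all_goals
    simp only [Multiset.map_cons, Multiset.sum_cons]
    omega

theorem prod_map_eq_of_map_chain_eq (ht : Function.Injective t) (hb : Function.Injective b)
    (htop : ∀ c, pos (t c) = pos (b c) + 1) {Q : Type*} [CommMonoid Q] {z : V → Q}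
    (hz : ∀ c₁ c₂, z (b c₁) * z (t c₂) = z (t c₁) * z (b c₂)) {U W : Multiset V}
    (hchain : U.map (chain t b) = W.map (chain t b)) (hpos : (U.map pos).sum = (W.map pos).sum) :
    (U.map z).prod = (W.map z).prod := by
  have hrel : Multiset.Rel (fun v w => chain t b v = chain t b w) U W := by
    rwa [← Multiset.rel_map, Multiset.rel_eq]
  obtain ⟨P, rfl, rfl, hP⟩ := exists_pairs_of_rel hrel
  simp only [Multiset.map_map] at hpos ⊢
  exact prod_map_fst_eq_prod_map_snd ht hb htop hz P hP hpos

end Chains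

section MinorRegularity

variable {V C R : Type*} [CommRing R] {t b : C → V} {pos : V → ℕ}

/-- The weight of the entry `v` in the toric embedding `v ↦ x_a * z ^ p` of the variety of minors,
where `a` is the chain and `p` the position of `v`; `none` is the index of the variable `z`. -/
def chainWeight (t b : C → V) (pos : V → ℕ) (v : V) : Option (Quot (ColumnStep t b)) →₀ ℕ :=
  Finsupp.single (some (chain t b v)) 1 + Finsupp.single none (pos v)

theorem linearCombination_chainWeight_none (u : V →₀ ℕ) :
    Finsupp.linearCombination ℕ (chainWeight t b pos) u none =
      ((Finsupp.toMultiset u).map pos).sum := by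
  induction u using Finsupp.induction_linear with
  | zero => simp
  | add u w hu hw => simp [hu, hw]
  | single v m => simp [chainWeight, Multiset.map_nsmul, Multiset.sum_nsmul]

theorem linearCombination_chainWeight_some (u : V →₀ ℕ) (a : Quot (ColumnStep t b)) :
    Finsupp.linearCombination ℕ (chainWeight t b pos) u (some a) = u.mapDomain (chain t b) a := by
  classical
  induction u using Finsupp.induction_linear with
  | zero => simp
  | add u w hu hw => simp [hu, hw, Finsupp.mapDomain_add]
  | single v m => simp [chainWeight, Finsupp.single_apply]

variable [LinearOrder C]

theorem minorIdeal_le_ker_toricMap (htop : ∀ c, pos (t c) = pos (b c) + 1) :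
    minorIdeal R t b ≤ RingHom.ker (toricMap R (chainWeight t b pos)) := by
  rw [minorIdeal, Ideal.span_le]
  rintro _ ⟨c₁, c₂, -, rfl⟩
  rw [SetLike.mem_coe, RingHom.mem_ker, map_sub, map_mul, map_mul, sub_eq_zero]
  simp only [toricMap_X, monomial_mul, chainWeight, chain_top (t := t) (b := b), htop,
    Finsupp.single_add]
  congr 2
  abel

theorem mk_minorIdeal_bottom_mul_top (c₁ c₂ : C) :
    Ideal.Quotient.mk (minorIdeal R t b) (X (b c₁)) * Ideal.Quotient.mk _ (X (t c₂)) =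
      Ideal.Quotient.mk (minorIdeal R t b) (X (t c₁)) * Ideal.Quotient.mk _ (X (b c₂)) := by
  have key : ∀ {c₁ c₂}, c₁ < c₂ → Ideal.Quotient.mk (minorIdeal R t b) (X (b c₁) * X (t c₂)) =
      Ideal.Quotient.mk _ (X (t c₁) * X (b c₂)) := fun {c₁ c₂} h => by
    rw [mul_comm (X (b c₁)), eq_comm, Ideal.Quotient.eq]
    exact Ideal.subset_span ⟨c₁, c₂, h, rfl⟩
  rw [← map_mul, ← map_mul]
  rcases lt_trichotomy c₁ c₂ with h | rfl | h
  · exact key h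
  · rw [mul_comm]
  · rw [mul_comm, ← key h, mul_comm]

theorem isSMulRegular_X_sub_X_quotient_minorIdeal (ht : Function.Injective t)
    (hb : Function.Injective b) (htop : ∀ c, pos (t c) = pos (b c) + 1) {x y : V} (hxy : x ≠ y)
    (hpos : pos x = pos y) :
    IsSMulRegular (MvPolynomial V R ⧸ minorIdeal R t b) (X y - X x : MvPolynomial V R) := by
  refine isSMulRegular_quotient_of_toricMap (minorIdeal_le_ker_toricMap htop) (fun u w huw => ?_) ?_
  · rw [mk_monomial_one_eq_prod, mk_monomial_one_eq_prod]
    refine prod_map_eq_of_map_chain_eq ht hb htop mk_minorIdeal_bottom_mul_top ?_ ?_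
    · rw [Finsupp.toMultiset_map, Finsupp.toMultiset_map]
      congr 1
      ext a
      rw [← linearCombination_chainWeight_some (pos := pos), huw,
        linearCombination_chainWeight_some]
    · rw [← linearCombination_chainWeight_none (t := t) (b := b), huw,
        linearCombination_chainWeight_none]
  · have hchain : chain t b x ≠ chain t b y := fun h =>
      hxy (eq_of_chain_eq_of_pos_eq ht hb htop h hpos)
    have himage : toricMap R (chainWeight t b pos) (X y - X x) =
        (X (some (chain t b y)) - X (some (chain t b x))) * X none ^ pos y := by
      rw [map_sub, toricMap_X, toricMap_X, chainWeight, chainWeight, hpos, sub_mul,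
        X_pow_eq_monomial, X, X, monomial_mul, monomial_mul, one_mul]
    rw [himage]
    exact (isSMulRegular_X_sub_X (by simpa using hchain)).mul (isRegular_X_pow _).left.isSMulRegular

end MinorRegularity

section Identifications

theorem comap_map_eq_sup_of_sub_mem {A : Type*} [CommRing A] {φ : A →+* A} {N Q : Ideal A}
    (hQ : Q ≤ RingHom.ker φ) (hφ : ∀ f, φ f - f ∈ Q) : (N.map φ).comap φ = N ⊔ Q := by
  have hmap : N.map φ ≤ N ⊔ Q := Ideal.map_le_iff_le_comap.2 fun f hf => by
    rw [Ideal.mem_comap, ← sub_add_cancel (φ f) f]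
    exact add_mem (Ideal.mem_sup_right (hφ f)) (Ideal.mem_sup_left hf)
  refine le_antisymm (fun f hf => ?_) (sup_le Ideal.le_comap_map ?_)
  · rw [← sub_sub_cancel (φ f) f]
    exact sub_mem (hmap hf) (Ideal.mem_sup_right (hφ f))
  · exact hQ.trans (Ideal.comap_mono bot_le)

variable {V R : Type*} [CommRing R] {N : Ideal (MvPolynomial V R)} {π : V → V} {T : Set V}

open Classical in
/-- The substitution replacing each variable `v ∈ T` by `π v`. -/
def identify (π : V → V) (T : Set V) : V → V := fun v => if v ∈ T then π v else v

theorem identify_of_mem {v : V} (hv : v ∈ T) : identify π T v = π v :=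
  if_pos hv

theorem identify_of_notMem {v : V} (hv : v ∉ T) : identify π T v = v :=
  if_neg hv

theorem comp_identify {P : Type*} {pos : V → P} (hpos : ∀ v, pos (π v) = pos v) :
    pos ∘ identify π T = pos := by
  ext v
  by_cases hv : v ∈ T
  · rw [Function.comp_apply, identify_of_mem hv, hpos]
  · rw [Function.comp_apply, identify_of_notMem hv]

theorem identify_eq_iff_of_notMem {v y : V} (hπ : ∀ v, π v ≠ y) (hy : y ∉ T) :
    identify π T v = y ↔ v = y := by
  constructor
  · intro h
    by_cases hv : v ∈ T
    · exact absurd ((identify_of_mem hv).symm.trans h) (hπ v)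
    · exact (identify_of_notMem hv).symm.trans h
  · rintro rfl
    exact identify_of_notMem hy

theorem comap_rename_identify (hT : ∀ v ∈ T, π v ∉ T) :
    (N.map (rename (identify π T))).comap (rename (identify π T)) =
      N ⊔ Ideal.span ((fun v => X v - X (π v)) '' T) := by
  refine comap_map_eq_sup_of_sub_mem (φ := (rename (identify π T) : _ →ₐ[R] _).toRingHom) ?_ ?_
  · rw [Ideal.span_le]
    rintro _ ⟨v, hv, rfl⟩
    simp [RingHom.mem_ker, identify_of_mem hv, identify_of_notMem (hT v hv)]
  · intro f
    rw [← Ideal.Quotient.eq]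
    refine DFunLike.congr_fun (algHom_ext (f := (Ideal.Quotient.mkₐ R _).comp (rename _))
      (g := Ideal.Quotient.mkₐ R _) fun v => ?_) f
    by_cases hv : v ∈ T
    · rw [AlgHom.comp_apply, rename_X, identify_of_mem hv]
      refine (Ideal.Quotient.eq.2 ?_).symm
      exact Ideal.subset_span ⟨v, hv, rfl⟩
    · rw [AlgHom.comp_apply, rename_X, identify_of_notMem hv]

theorem isRegSeqOnQuot_map_X_sub_X [Nontrivial R] {ys : List V} (hys : ys.Nodup)
    (hπ : ∀ v, π v ∉ ys) (hN : N ≤ RingHom.ker constantCoeff)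
    (hreg : ∀ (T : Set V), ∀ y ∈ ys, y ∉ T →
      IsSMulRegular (MvPolynomial V R ⧸ N.map (rename (identify π T)))
        (X y - X (π y) : MvPolynomial V R)) :
    IsRegSeqOnQuot (MvPolynomial V R) (ys.map fun v => X v - X (π v)) N := by
  have himage (l : List V) : {a | a ∈ l.map fun v => (X v - X (π v) : MvPolynomial V R)} =
      (fun v => X v - X (π v)) '' {v | v ∈ l} := by
    ext
    simp
  constructor
  · intro j hj f hf
    rw [List.length_map] at hj
    let T : Set V := {v | v ∈ ys.take j}
    have hπT (v : V) : π v ∉ T := fun h => hπ v (List.mem_of_mem_take h)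
    have hyT : ys[j] ∉ T := by
      intro h
      obtain ⟨m, hm, h⟩ := List.mem_take_iff_getElem.1 h
      have := hys.getElem_inj_iff.1 h
      omega
    rw [← List.map_take, himage, ← comap_rename_identify fun v _ => hπT v] at hf ⊢
    rw [List.get_eq_getElem, List.getElem_map, Ideal.mem_comap, map_mul, map_sub, rename_X,
      rename_X, identify_of_notMem hyT, identify_of_notMem (hπT _)] at hf
    exact (isSMulRegular_quotient_iff_mem_of_smul_mem _ _).1
      (hreg T _ (List.getElem_mem hj) hyT) _ hf
  · refine ne_top_of_le_ne_top (RingHom.ker_ne_top (constantCoeff (σ := V) (R := R)))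
      (sup_le hN (Ideal.span_le.2 ?_))
    rw [himage]
    rintro _ ⟨v, -, rfl⟩
    simp [RingHom.mem_ker]

variable [Nontrivial R] {C : Type*} [LinearOrder C] {t b : C → V} {pos : V → ℕ} {ys : List V}

theorem isRegSeqOnQuot_minorIdeal (htop : ∀ c, pos (t c) = pos (b c) + 1)
    (hinj : Function.Injective (pos ∘ b)) (hpos : ∀ v, pos (π v) = pos v) (hys : ys.Nodup)
    (hπ : ∀ v, π v ∉ ys) :
    IsRegSeqOnQuot (MvPolynomial V R) (ys.map fun v => X v - X (π v)) (minorIdeal R t b) := by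
  refine isRegSeqOnQuot_map_X_sub_X hys hπ minorIdeal_le_ker_constantCoeff fun T y hy _ => ?_
  have hσ := congrFun (comp_identify (T := T) hpos)
  simp only [Function.comp_apply] at hσ
  rw [minorIdeal_map_rename]
  refine isSMulRegular_X_sub_X_quotient_minorIdeal (pos := pos) (fun c c' h => hinj ?_)
    (fun c c' h => hinj ?_) (fun c => ?_) ?_ (hpos y)
  · have := congrArg pos h
    simpa only [Function.comp_apply, hσ, htop, add_left_inj] using this
  · have := congrArg pos h
    simpa only [Function.comp_apply, hσ] using this
  · simp only [Function.comp_apply, hσ, htop]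
  · exact fun h => hπ y (by rwa [h])

theorem isRegSeqOnQuot_antidiagonalIdeal (htop : ∀ c, pos (t c) = pos (b c) + 1)
    (hinj : Function.Injective (pos ∘ b)) (hpos : ∀ v, pos (π v) = pos v) (hys : ys.Nodup)
    (hπ : ∀ v, π v ∉ ys) (hyb : ∀ c, b c ∈ ys → IsMax c)
    (hyt : ∀ c, t c ∈ ys → ∀ c₁ < c, ∀ c₂ ≥ c, pos (b c₁) < pos (b c₂)) :
    IsRegSeqOnQuot (MvPolynomial V R) (ys.map fun v => X v - X (π v))
      (antidiagonalIdeal R t b) := by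
  refine isRegSeqOnQuot_map_X_sub_X hys hπ antidiagonalIdeal_le_ker_constantCoeff
    fun T y hy hyT => ?_
  have hσ := congrFun (comp_identify (T := T) hpos)
  have hσy (v : V) := identify_eq_iff_of_notMem (v := v) (fun w (h : π w = y) => hπ w (h ▸ hy)) hyT
  simp only [Function.comp_apply] at hσ
  rw [antidiagonalIdeal_map_rename]
  refine isSMulRegular_X_sub_X_quotient_antidiagonalIdeal (pos := pos) (fun c => ?_) ?_ ?_ (hpos y)
    (fun c hc => hyb c ?_) (fun c hc c₁ h₁ c₂ h₂ => ?_)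
  · simp only [Function.comp_apply, hσ, htop]
  · simpa only [Function.Injective, Function.comp_apply, hσ] using hinj
  · exact fun h => hπ y (by rwa [h])
  · rwa [(hσy _).1 hc]
  · simpa only [Function.comp_apply, hσ] using hyt c (by rwa [(hσy _).1 hc]) c₁ h₁ c₂ h₂

end Identifications

section BlockMatrix

variable {n k : ℕ} {i : ℕ → ℕ}

/-- The index sequences `1 = i 0 < i 1 < ⋯ < i k = n + 1` that cut the matrix into `k` blocks. -/
structure IsBlockSequence (n k : ℕ) (i : ℕ → ℕ) : Prop where
  zero_eq : i 0 = 1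
  last_eq : i k = n + 1
  lt_succ : ∀ r < k, i r < i (r + 1)

/-- The index of a variable once every `x_{v_l}` is identified with `x_{i_{l+2}}`, `x_{s_1}` with
`x_{i_{k-1}}` and `x_{s_2}` with `x_{i_1}`. -/
def varPos (n k : ℕ) (i : ℕ → ℕ) : SVar n k → ℕ :=
  Sum.elim (fun m => m + 1)
    (Sum.elim (fun l => i (l + 2)) (fun e => if e = 0 then i (k - 1) else i 1))

/-- The leading variables of the sequence `𝒜`, in order. -/
def leadingVars (n k : ℕ) : List (SVar n k) :=
  (List.range (k - 1)).map (vvS n k) ++ [s1S n k, s2S n k]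

/-- The block containing column `c`; columns count from `0`, so that the block `r` consists of the
columns `c` with `i r ≤ c + 1 < i (r + 1)`. -/
def block (k : ℕ) (i : ℕ → ℕ) (c : ℕ) : ℕ := Nat.findGreatest (fun r => i r ≤ c + 1) k

/-- The position of column `c` in its block. -/
def offset (k : ℕ) (i : ℕ → ℕ) (c : ℕ) : ℕ := c + 1 - i (block k i c)

/-- The variable in the bottom row and column `c` of the matrix `A`. -/
def bottomVar (n k : ℕ) (i : ℕ → ℕ) (c : ℕ) : SVar n k :=
  if block k i c = k - 1 ∧ offset k i c = i k - i (k - 1) - 1 then s1S n k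
  else xvS n k (i (block k i c + 1) - 1 - offset k i c)

/-- The variable in the top row and column `c` of the matrix `A`. -/
def topVar (n k : ℕ) (i : ℕ → ℕ) (c : ℕ) : SVar n k :=
  if offset k i c = 0 then
    if block k i c = 0 then s2S n k else vvS n k (block k i c - 1)
  else xvS n k (i (block k i c + 1) - offset k i c)

theorem varPos_xvS {j : ℕ} (h₁ : 1 ≤ j) (h₂ : j ≤ n + 1) : varPos n k i (xvS n k j) = j := by
  simp only [varPos, xvS, Sum.elim_inl]
  rw [Nat.mod_eq_of_lt (by omega)]
  omega

theorem varPos_vvS {l : ℕ} (hl : l < k - 1) : varPos n k i (vvS n k l) = i (l + 2) := by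
  simp [varPos, vvS, hl]

theorem varPos_s1S : varPos n k i (s1S n k) = i (k - 1) := rfl

theorem varPos_s2S : varPos n k i (s2S n k) = i 1 := rfl

theorem mem_leadingVars {v : SVar n k} : v ∈ leadingVars n k ↔ v.isRight := by
  have hvv (l : Fin (k - 1)) : vvS n k l = Sum.inr (Sum.inl l) := dif_pos l.2
  constructor
  · simp only [leadingVars, List.mem_append, List.mem_map, List.mem_range, List.mem_cons,
      List.not_mem_nil, or_false]
    rintro (⟨l, hl, rfl⟩ | rfl | rfl)
    exacts [by simp [vvS, hl], rfl, rfl]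
  · rcases v with m | l | e
    · simp
    · exact fun _ => List.mem_append_left _ (List.mem_map.2 ⟨l, List.mem_range.2 l.2, hvv l⟩)
    · intro _
      fin_cases e <;> simp [leadingVars, s1S, s2S]

theorem nodup_leadingVars : (leadingVars n k).Nodup := by
  refine List.nodup_append'.2 ⟨?_, by simp [s1S, s2S], ?_⟩
  · refine (List.nodup_map_iff_inj_on List.nodup_range).2 fun l hl m hm h => ?_
    simpa [vvS, List.mem_range.1 hl, List.mem_range.1 hm] using h
  · simp +contextual [List.disjoint_left, vvS, s1S, s2S]

theorem map_leadingVars {R : Type*} [CommRing R] :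
    ((leadingVars n k).map fun v => (X v - X (xvS n k (varPos n k i v)) : MvPolynomial _ R)) =
      ((List.range (k - 1)).map fun j => X (vvS n k j) - X (xvS n k (i (j + 2)))) ++
        [X (s1S n k) - X (xvS n k (i (k - 1))), X (s2S n k) - X (xvS n k (i 1))] := by
  rw [leadingVars, List.map_append, List.map_map]
  congr 1
  refine List.map_congr_left fun l hl => ?_
  rw [Function.comp_apply, varPos_vvS (List.mem_range.1 hl)]

namespace IsBlockSequence

variable (hi : IsBlockSequence n k i)
include hi

theorem strictMonoOn : StrictMonoOn i (Set.Iic k) :=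
  strictMonoOn_Iic_of_lt_succ hi.lt_succ

theorem one_le_apply {r : ℕ} (hr : r ≤ k) : 1 ≤ i r :=
  hi.zero_eq.symm.trans_le (hi.strictMonoOn.monotoneOn (Nat.zero_le k) hr (Nat.zero_le r))

theorem apply_le {r : ℕ} (hr : r ≤ k) : i r ≤ n + 1 :=
  (hi.strictMonoOn.monotoneOn hr Set.self_mem_Iic hr).trans_eq hi.last_eq

theorem varPos_mem_Icc (hk : 0 < k) (v : SVar n k) : varPos n k i v ∈ Set.Icc 1 (n + 1) := by
  rcases v with m | l | e
  · exact ⟨Nat.le_add_left _ _, m.2⟩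
  · exact ⟨hi.one_le_apply (by omega), hi.apply_le (by omega)⟩
  · fin_cases e
    · exact ⟨hi.one_le_apply (Nat.sub_le k 1), hi.apply_le (Nat.sub_le k 1)⟩
    · exact ⟨hi.one_le_apply hk, hi.apply_le hk⟩

theorem varPos_xvS_varPos (hk : 0 < k) (v : SVar n k) :
    varPos n k i (xvS n k (varPos n k i v)) = varPos n k i v :=
  varPos_xvS (hi.varPos_mem_Icc hk v).1 (hi.varPos_mem_Icc hk v).2

theorem apply_block_le (c : ℕ) : i (block k i c) ≤ c + 1 :=
  Nat.findGreatest_spec (P := fun r => i r ≤ c + 1) (Nat.zero_le k)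
    (hi.zero_eq.trans_le (Nat.le_add_left _ _))

theorem block_lt (c : Fin n) : block k i c < k := by
  refine (Nat.findGreatest_le k).lt_of_ne fun h => ?_
  have := hi.apply_block_le c
  rw [block, h, hi.last_eq] at this
  omega

theorem lt_apply_block_succ (c : Fin n) : c + 1 < i (block k i c + 1) :=
  not_le.1 (Nat.findGreatest_is_greatest (P := fun r => i r ≤ c + 1) (Nat.lt_succ_self _)
    (hi.block_lt c))

theorem offset_lt (c : Fin n) :
    offset k i c < i (block k i c + 1) - i (block k i c) := by
  have := hi.apply_block_le c
  have := hi.lt_apply_block_succ c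
  rw [offset]
  omega

theorem val_eq_add_offset (c : Fin n) : (c : ℕ) = i (block k i c) - 1 + offset k i c := by
  have := hi.one_le_apply (hi.block_lt c).le
  have := hi.apply_block_le c
  rw [offset]
  omega

theorem varPos_bottomVar (c : Fin n) :
    varPos n k i (bottomVar n k i c) = i (block k i c + 1) - 1 - offset k i c := by
  have hlt := hi.block_lt c
  have hoff := hi.offset_lt c
  rw [bottomVar]
  split_ifs with h
  · have := hi.lt_succ _ hlt
    rw [h.1, Nat.sub_add_cancel (by omega)] at this
    rw [varPos_s1S, h.2, h.1, Nat.sub_add_cancel (by omega)]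
    omega
  · have := hi.one_le_apply hlt.le
    have : i (block k i c + 1) ≤ n + 1 := hi.apply_le hlt
    exact varPos_xvS (by omega) (by omega)

theorem varPos_topVar (c : Fin n) :
    varPos n k i (topVar n k i c) = i (block k i c + 1) - offset k i c := by
  have hlt := hi.block_lt c
  rw [topVar]
  split_ifs with hs hr
  · rw [varPos_s2S, hr, hs, Nat.sub_zero]
  · rw [varPos_vvS (by omega), hs, Nat.sub_zero]
    congr 1
    omega
  · have hoff := hi.offset_lt c
    have : i (block k i c + 1) ≤ n + 1 := hi.apply_le hlt
    exact varPos_xvS (by omega) (by omega)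

theorem varPos_topVar_eq_add_one (c : Fin n) :
    varPos n k i (topVar n k i c) = varPos n k i (bottomVar n k i c) + 1 := by
  have := hi.offset_lt c
  rw [hi.varPos_topVar, hi.varPos_bottomVar]
  omega

theorem varPos_bottomVar_mem_Ico (c : Fin n) :
    varPos n k i (bottomVar n k i c) ∈ Set.Ico (i (block k i c)) (i (block k i c + 1)) := by
  have := hi.offset_lt c
  rw [hi.varPos_bottomVar, Set.mem_Ico]
  omega

theorem le_of_apply_lt_apply_succ {r r' : ℕ} (hr : r < k) (hr' : r' < k)
    (h : i r < i (r' + 1)) : r ≤ r' :=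
  Nat.lt_succ_iff.1 ((hi.strictMonoOn.lt_iff_lt hr.le hr').1 h)

theorem injective_varPos_bottomVar :
    Function.Injective (varPos n k i ∘ fun c : Fin n => bottomVar n k i c) := by
  intro c c' h
  rw [Function.comp_apply, Function.comp_apply] at h
  have hc := hi.varPos_bottomVar_mem_Ico c
  have hc' := hi.varPos_bottomVar_mem_Ico c'
  have hblock : block k i c = block k i c' :=
    (hi.le_of_apply_lt_apply_succ (hi.block_lt c) (hi.block_lt c')
      (hc.1.trans_lt (h.trans_lt hc'.2))).antisymm
    (hi.le_of_apply_lt_apply_succ (hi.block_lt c') (hi.block_lt c)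
      (hc'.1.trans_lt (h.symm.trans_lt hc.2)))
  have hoff := hi.offset_lt c
  have hoff' := hi.offset_lt c'
  rw [hi.varPos_bottomVar, hi.varPos_bottomVar, hblock] at h
  ext
  rw [hi.val_eq_add_offset c, hi.val_eq_add_offset c', hblock]
  rw [hblock] at hoff
  omega

theorem isMax_of_bottomVar_mem_leadingVars {c : Fin n}
    (hc : bottomVar n k i c ∈ leadingVars n k) : IsMax c := by
  rw [mem_leadingVars, bottomVar] at hc
  split_ifs at hc with h
  · have hlt := hi.block_lt c
    have hval := hi.val_eq_add_offset c
    have := hi.one_le_apply hlt.le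
    have := hi.lt_succ _ hlt
    rw [h.1, Nat.sub_add_cancel (by omega), hi.last_eq] at this
    rw [h.1, h.2, hi.last_eq] at hval
    intro c' _
    rw [Fin.le_def]
    omega
  · cases hc

/- A leading variable in the top row opens its block, and the positions increase with the block. -/
theorem varPos_bottomVar_lt_of_topVar_mem_leadingVars {c c₁ c₂ : Fin n}
    (hc : topVar n k i c ∈ leadingVars n k) (h₁ : c₁ < c) (h₂ : c ≤ c₂) :
    varPos n k i (bottomVar n k i c₁) < varPos n k i (bottomVar n k i c₂) := by
  have hoff : offset k i c = 0 := by
    by_contra hoff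
    rw [mem_leadingVars, topVar, if_neg hoff] at hc
    cases hc
  have hstart : i (block k i c) = c + 1 := by
    have := hi.val_eq_add_offset c
    have := hi.one_le_apply (hi.block_lt c).le
    omega
  have hblock₁ : block k i c₁ < block k i c := by
    rw [← hi.strictMonoOn.lt_iff_lt (hi.block_lt c₁).le (hi.block_lt c).le, hstart]
    exact (hi.apply_block_le c₁).trans_lt (Nat.succ_lt_succ h₁)
  have hblock₂ : block k i c ≤ block k i c₂ := by
    refine hi.le_of_apply_lt_apply_succ (hi.block_lt c) (hi.block_lt c₂) ?_
    exact hstart.trans_lt ((Nat.succ_le_succ h₂).trans_lt (hi.lt_apply_block_succ c₂))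
  calc varPos n k i (bottomVar n k i c₁)
      < i (block k i c₁ + 1) := (hi.varPos_bottomVar_mem_Ico c₁).2
    _ ≤ i (block k i c₂) := hi.strictMonoOn.monotoneOn (hi.block_lt c₁) (hi.block_lt c₂).le
        (hblock₁.trans_le hblock₂)
    _ ≤ varPos n k i (bottomVar n k i c₂) := (hi.varPos_bottomVar_mem_Ico c₂).1

end IsBlockSequence

end BlockMatrix

theorem statement_13_general (R : Type*) [CommRing R] [Nontrivial R] (n k : ℕ) (hk : 0 < k)
    (i : ℕ → ℕ) (hi0 : i 0 = 1) (hik : i k = n + 1) (himono : ∀ r < k, i r < i (r + 1))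
    (A : Matrix (Fin 2) (Fin n) (MvPolynomial (SVar n k) R))
    (hA1 : ∀ r t : ℕ, r < k → t < i (r + 1) - i r → ∀ c : Fin n, (c : ℕ) = i r - 1 + t →
      A 1 c = if r = k - 1 ∧ t = i k - i (k - 1) - 1 then X (s1S n k)
              else X (xvS n k (i (r + 1) - 1 - t)))
    (hA0 : ∀ r t : ℕ, r < k → t < i (r + 1) - i r → ∀ c : Fin n, (c : ℕ) = i r - 1 + t →
      A 0 c = if t = 0 then (if r = 0 then X (s2S n k) else X (vvS n k (r - 1)))
              else X (xvS n k (i (r + 1) - t)))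
    (As : List (MvPolynomial (SVar n k) R))
    (hAs : As = ((List.range (k - 1)).map fun j => X (vvS n k j) - X (xvS n k (i (j + 2))))
      ++ [X (s1S n k) - X (xvS n k (i (k - 1))), X (s2S n k) - X (xvS n k (i 1))]) :
    IsRegSeqOnQuot (MvPolynomial (SVar n k) R) As
      (Ideal.span { f | ∃ c₁ c₂ : Fin n, c₁ < c₂ ∧ f = A 1 c₁ * A 0 c₂ }) ∧
    IsRegSeqOnQuot (MvPolynomial (SVar n k) R) As
      (Ideal.span { f | ∃ c₁ c₂ : Fin n, c₁ < c₂ ∧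
        f = A 0 c₁ * A 1 c₂ - A 0 c₂ * A 1 c₁ }) := by
  have hi : IsBlockSequence n k i := ⟨hi0, hik, himono⟩
  have hbot (c : Fin n) : A 1 c = X (bottomVar n k i c) := by
    rw [hA1 _ _ (hi.block_lt c) (hi.offset_lt c) c (hi.val_eq_add_offset c), bottomVar, apply_ite X]
  have htop (c : Fin n) : A 0 c = X (topVar n k i c) := by
    rw [hA0 _ _ (hi.block_lt c) (hi.offset_lt c) c (hi.val_eq_add_offset c), topVar, apply_ite X,
      apply_ite X]
  have hpos := hi.varPos_xvS_varPos hk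
  have hfix (v : SVar n k) : xvS n k (varPos n k i v) ∉ leadingVars n k := by
    simp [mem_leadingVars, xvS]
  simp only [hbot, htop]
  rw [hAs, ← map_leadingVars]
  exact ⟨isRegSeqOnQuot_antidiagonalIdeal hi.varPos_topVar_eq_add_one hi.injective_varPos_bottomVar
      hpos nodup_leadingVars hfix (fun _ => hi.isMax_of_bottomVar_mem_leadingVars)
      fun _ hc _ h₁ _ h₂ => hi.varPos_bottomVar_lt_of_topVar_mem_leadingVars hc h₁ h₂,
    isRegSeqOnQuot_minorIdeal hi.varPos_topVar_eq_add_one hi.injective_varPos_bottomVar hpos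
      nodup_leadingVars hfix⟩

/-- The sequence
`𝒜 = (x_{v_0} - x_{i_2}, …, x_{v_{k-2}} - x_{i_k}, x_{s_1} - x_{i_{k-1}}, x_{s_2} - x_{i_1})`
is a regular sequence on `S/M_{Π,M}` and on `S/I_{Π,M}`, where `I_{Π,M}` (resp. `M_{Π,M}`)
is generated by the `2 × 2` minors (resp. anti-diagonals of `2 × 2` minors) of the block
matrix `A` associated to the sequence `1 = i_0 < i_1 < ⋯ < i_k = n + 1`. -/
theorem statement_13 (K : Type*) [Field K] (n k : ℕ) (hn : 2 ≤ n) (hk : 2 ≤ k)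
    (i : ℕ → ℕ) (hi0 : i 0 = 1) (hik : i k = n + 1) (himono : ∀ r < k, i r < i (r + 1))
    (A : Matrix (Fin 2) (Fin n) (MvPolynomial (SVar n k) K))
    (hA1 : ∀ r t : ℕ, r < k → t < i (r + 1) - i r → ∀ c : Fin n, (c : ℕ) = i r - 1 + t →
      A 1 c = if r = k - 1 ∧ t = i k - i (k - 1) - 1 then X (s1S n k)
              else X (xvS n k (i (r + 1) - 1 - t)))
    (hA0 : ∀ r t : ℕ, r < k → t < i (r + 1) - i r → ∀ c : Fin n, (c : ℕ) = i r - 1 + t →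
      A 0 c = if t = 0 then (if r = 0 then X (s2S n k) else X (vvS n k (r - 1)))
              else X (xvS n k (i (r + 1) - t)))
    (As : List (MvPolynomial (SVar n k) K))
    (hAs : As = ((List.range (k - 1)).map fun j => X (vvS n k j) - X (xvS n k (i (j + 2))))
      ++ [X (s1S n k) - X (xvS n k (i (k - 1))), X (s2S n k) - X (xvS n k (i 1))]) :
    IsRegSeqOnQuot (MvPolynomial (SVar n k) K) As
      (Ideal.span { f | ∃ c₁ c₂ : Fin n, c₁ < c₂ ∧ f = A 1 c₁ * A 0 c₂ }) ∧
    IsRegSeqOnQuot (MvPolynomial (SVar n k) K) As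
      (Ideal.span { f | ∃ c₁ c₂ : Fin n, c₁ < c₂ ∧
        f = A 0 c₁ * A 1 c₂ - A 0 c₂ * A 1 c₁ }) :=
  statement_13_general K n k (by omega) i hi0 hik himono A hA1 hA0 As hAs
end
end

section
/- For every parcycle (C_n,Π) with Π = {V_1,…,V_k} and sink V_k, there exists a weight vector λ ∈ ℕ^n such that λ·b_{V_i} > 0 for every i = 1,…,k−1. -/
/-!
Write `p x = x (n - x)` for the product of the lengths of the two arcs between `0` and `x`, and give
the vertex `l` the weight `p (l - s)`, where `s` is a vertex of the sink. Pairing a weight with a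
Laplacian row gives minus its second difference along the cycle. That of `p` is `-2` at every
`x ≠ 0`, so the weight pairs to `2` with each row other than that of `s`, hence to `2 |S|` with
`b_S` for every set `S` of vertices that avoids `s`.
-/

noncomputable section

open MvPolynomial

/-- Row of the Laplacian matrix of the `n`-cycle on `Fin n`
(vertex `j` of the paper corresponds to index `j-1`). -/
def cycLap (n : ℕ) [NeZero n] (j : Fin n) : Fin n → ℤ :=
  fun l => if l = j then 2 else if l = j + 1 ∨ j = l + 1 then -1 else 0

/-- The cycle graph `C_n` on `Fin n`. -/
def cycleG (n : ℕ) [NeZero n] : SimpleGraph (Fin n) :=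
  SimpleGraph.fromRel (fun i j => j = i + 1)

/-- The lattice ideal of a lattice `L ⊆ ℤ^n` in `K[x_1,…,x_n]`. -/
def latticeIdeal (n : ℕ) (K : Type*) [Field K] (L : Submodule ℤ (Fin n → ℤ)) :
    Ideal (MvPolynomial (Fin n) K) :=
  Ideal.span { f | ∃ u v : Fin n → ℕ,
    ((fun i => (u i : ℤ)) - fun i => (v i : ℤ)) ∈ L ∧
    f = (∏ i, X i ^ u i) - ∏ i, X i ^ v i }

open Classical in
/-- The exponent vector of the monomial `x^{S → S̄}`: the `i`-th entry is the number
of edges of the cycle joining `i ∈ S` to the complement of `S`. -/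
def outVec (n : ℕ) [NeZero n] (S : Set (Fin n)) (i : Fin n) : ℕ :=
  if i ∈ S then (if i + 1 ∈ S then 0 else 1) + (if i - 1 ∈ S then 0 else 1) else 0

/-- The monomial `x^{S → S̄}`. -/
def outMono (n : ℕ) (K : Type*) [NeZero n] [Field K] (S : Set (Fin n)) :
    MvPolynomial (Fin n) K :=
  ∏ i, X i ^ outVec n S i

open Classical in
/-- `b_V = ∑_{j ∈ V} b_j`, sum of Laplacian rows over a set of vertices. -/
def bPart (n : ℕ) [NeZero n] (S : Set (Fin n)) : Fin n → ℤ :=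
  ∑ j : Fin n, if j ∈ S then cycLap n j else 0

/-- The toppling ideal of the parcycle `(C_n, {V_1,…,V_k})`: the lattice ideal of the
lattice generated by the vectors `b_{V_j}`. -/
def topplingPar (n k : ℕ) (K : Type*) [NeZero n] [Field K] (V : Fin k → Set (Fin n)) :
    Ideal (MvPolynomial (Fin n) K) :=
  latticeIdeal n K (Submodule.span ℤ (Set.range fun j => bPart n (V j)))

/-- `S` is a connected-parset of the parcycle `(C_n, V)`: a union of parts inducing a
connected subgraph of the cycle. -/
def isConnParset (n k : ℕ) [NeZero n] (V : Fin k → Set (Fin n)) (S : Set (Fin n)) : Prop :=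
  (∃ T : Set (Fin k), S = ⋃ j ∈ T, V j) ∧ ((cycleG n).induce S).Connected

/-- The `G`-parking function ideal of a parcycle with sink part `V sink`. -/
def gparkIdeal (n k : ℕ) (K : Type*) [NeZero n] [Field K] (V : Fin k → Set (Fin n))
    (sink : Fin k) : Ideal (MvPolynomial (Fin n) K) :=
  Ideal.span { f | ∃ S : Set (Fin n), isConnParset n k V S ∧ ¬ V sink ⊆ S ∧
    f = outMono n K S }

/-- The index in `Fin (n+1)` of the paper's variable `x_m`, `1 ≤ m ≤ n+1`. -/
def xIdx (n : ℕ) (m : ℕ) : Fin (n + 1) := ⟨(m - 1) % (n + 1), Nat.mod_lt _ (Nat.succ_pos n)⟩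

/-- The defining ideal `P_n ⊆ K[x_1,…,x_{n+1}]` of the rational normal curve of degree `n`. -/
def Pideal (n : ℕ) (K : Type*) [Field K] : Ideal (MvPolynomial (Fin (n + 1)) K) :=
  Ideal.span { f | ∃ i j : ℕ, 2 ≤ i ∧ i ≤ j ∧ j ≤ n ∧
    f = X (xIdx n i) * X (xIdx n j) - X (xIdx n (i - 1)) * X (xIdx n (j + 1)) }

open Classical in
/-- The `λ`-weight of an exponent vector. -/
def wdeg (n : ℕ) (lam : Fin n → ℕ) (u : Fin n →₀ ℕ) : ℕ := ∑ i, lam i * u i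

open Classical in
/-- The `λ`-initial form of a polynomial: the sum of its terms of maximal `λ`-weight. -/
def initForm (n : ℕ) (K : Type*) [Field K] (lam : Fin n → ℕ) (f : MvPolynomial (Fin n) K) :
    MvPolynomial (Fin n) K :=
  ∑ u ∈ f.support.filter (fun u => wdeg n lam u = f.support.sup (wdeg n lam)),
    monomial u (coeff u f)

/-- The `λ`-initial ideal of an ideal. -/
def initIdeal (n : ℕ) (K : Type*) [Field K] (lam : Fin n → ℕ)
    (I : Ideal (MvPolynomial (Fin n) K)) : Ideal (MvPolynomial (Fin n) K) :=
  Ideal.span { g | ∃ f ∈ I, f ≠ 0 ∧ g = initForm n K lam f }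

section CycleLaplacian

variable {n : ℕ} [NeZero n]

lemma cycLap_eq_single (hn : 3 ≤ n) (j : Fin n) :
    cycLap n j = Pi.single j 2 - Pi.single (j + 1) 1 - Pi.single (j - 1) 1 := by
  have one_add_one_ne_zero : (1 + 1 : Fin n) ≠ 0 := by
    simp [Fin.ext_iff, Fin.val_add, Nat.mod_eq_of_lt (show 2 < n from hn)]
  ext l
  have eq_add_one_iff : j = l + 1 ↔ l = j - 1 := by rw [eq_sub_iff_add_eq, eq_comm]
  grind [cycLap, Pi.sub_apply]

lemma dotProduct_cycLap (hn : 3 ≤ n) (f : Fin n → ℤ) (j : Fin n) :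
    f ⬝ᵥ cycLap n j = 2 * f j - f (j + 1) - f (j - 1) := by
  simp [cycLap_eq_single hn, mul_comm]

open Classical in
lemma dotProduct_bPart (f : Fin n → ℤ) (S : Set (Fin n)) :
    f ⬝ᵥ bPart n S = ∑ j with j ∈ S, f ⬝ᵥ cycLap n j := by
  rw [bPart, ← Finset.sum_filter, dotProduct_sum]

end CycleLaplacian

section ArcProduct

variable {n : ℕ}

/-- The product of the lengths of the two arcs of the `n`-cycle between `0` and `x`. This is the
expected time at which the simple random walk started at `x` first hits `0`; translated to the sink,
it is the weight vector of the theorem. -/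
def arcProduct (x : Fin n) : ℕ := x * (n - x)

lemma natCast_arcProduct (x : Fin n) : (arcProduct x : ℤ) = x * (n - x) := by
  simp [arcProduct, Nat.cast_sub x.isLt.le]

variable [NeZero n]

lemma arcProduct_add_one (x : Fin n) :
    (arcProduct (x + 1) : ℤ) = arcProduct x + (n - 1 - 2 * x) := by
  simp only [natCast_arcProduct]
  obtain h | h : (x : ℕ) + 1 < n ∨ (x : ℕ) + 1 = n := by lia
  · rw [Fin.val_add_one_of_lt' h]
    push_cast
    ring
  · have wrap : x + 1 = 0 := by simp [Fin.ext_iff, Fin.val_add, h]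
    simp only [wrap, Fin.val_zero, ← h]
    push_cast
    ring

lemma arcProduct_second_difference {x : Fin n} (hx : x ≠ 0) :
    2 * (arcProduct x : ℤ) - arcProduct (x + 1) - arcProduct (x - 1) = 2 := by
  have next := arcProduct_add_one x
  have prev := arcProduct_add_one (x - 1)
  have val_pos : 0 < (x : ℕ) := Fin.pos_iff_ne_zero.2 hx
  rw [sub_add_cancel, Fin.val_sub_one_of_ne_zero hx, Nat.cast_pred val_pos] at prev
  linarith

lemma arcProduct_dotProduct_cycLap (hn : 3 ≤ n) {s j : Fin n} (hj : j ≠ s) :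
    (fun l ↦ (arcProduct (l - s) : ℤ)) ⬝ᵥ cycLap n j = 2 := by
  rw [dotProduct_cycLap hn, add_sub_right_comm, sub_right_comm j 1 s,
    arcProduct_second_difference (sub_ne_zero.2 hj)]

open Classical in
lemma arcProduct_dotProduct_bPart (hn : 3 ≤ n) {s : Fin n} {S : Set (Fin n)} (hs : s ∉ S) :
    (fun l ↦ (arcProduct (l - s) : ℤ)) ⬝ᵥ bPart n S = 2 * S.ncard := by
  have pairing_eq_two : ∀ j ∈ ({j | j ∈ S} : Finset (Fin n)),
      (fun l ↦ (arcProduct (l - s) : ℤ)) ⬝ᵥ cycLap n j = 2 := fun j hj ↦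
    arcProduct_dotProduct_cycLap hn (ne_of_mem_of_not_mem (Finset.mem_filter_univ j |>.1 hj) hs)
  rw [dotProduct_bPart, Finset.sum_congr rfl pairing_eq_two, Finset.sum_const, nsmul_eq_mul,
    mul_comm, ← Set.ncard_coe_finset, Finset.coe_filter_univ, Set.ofPred_mem_eq]

end ArcProduct

theorem statement_17_general {n : ℕ} [NeZero n] (hn : 3 ≤ n) (s : Fin n) :
    ∃ lam : Fin n → ℕ, ∀ S : Set (Fin n), S.Nonempty → s ∉ S →
      0 < ∑ l, (lam l : ℤ) * bPart n S l := by
  refine ⟨fun l ↦ arcProduct (l - s), fun S hS hs ↦ ?_⟩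
  calc (0 : ℤ) < 2 * S.ncard := mul_pos two_pos (Nat.cast_pos.2 hS.ncard_pos)
    _ = ∑ l, (arcProduct (l - s) : ℤ) * bPart n S l := (arcProduct_dotProduct_bPart hn hs).symm

/-- For every parcycle `(C_n, Π)` with sink `V_k` there is a weight
vector `λ ∈ ℕ^n` with `λ · b_{V_i} > 0` for all `i = 1, …, k - 1`. -/
theorem statement_17 (n k : ℕ) [NeZero n] (hn : 3 ≤ n) (hk : 1 ≤ k)
    (V : Fin k → Set (Fin n))
    (hcover : ∀ x : Fin n, ∃ j, x ∈ V j)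
    (hdisj : ∀ j₁ j₂ : Fin k, j₁ ≠ j₂ → Disjoint (V j₁) (V j₂))
    (hconn : ∀ j, ((cycleG n).induce (V j)).Connected)
    (hsink : (⟨n - 1, by omega⟩ : Fin n) ∈ V ⟨k - 1, by omega⟩) :
    ∃ lam : Fin n → ℕ, ∀ j : Fin k, (j : ℕ) < k - 1 →
      0 < ∑ l, (lam l : ℤ) * bPart n (V j) l := by
  obtain ⟨lam, hlam⟩ := statement_17_general hn ⟨n - 1, by omega⟩
  exact ⟨lam, fun j hj ↦ hlam (V j) (Set.nonempty_coe_sort.1 (hconn j).nonempty)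
    ((hdisj j _ (Fin.ne_of_val_ne hj.ne)).notMem_of_mem_right hsink)⟩
end
end

section
/- Let L ⊆ ℤ^{n+1} be the lattice generated by the vectors b_1 + b_{n+1}, b_2, b_3, …, b_n, where b_1,…,b_{n+1} are the rows of the Laplacian matrix of the cycle C_{n+1}. Then the lattice ideal of L in R_{n+1} equals P_n; that is, the defining ideal of the rational normal curve of degree n is the toppling ideal of the parcycle (C_{n+1}, Π) with Π = {{1,n+1},{2},{3},…,{n}}. -/
noncomputable section

open MvPolynomial

/-!
Both ideals are toric. Let `e_0, …, e_n` be the unit vectors of `ℤ^{n+1}`. Modulo the span of the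
rows `b_2, …, b_n` of the Laplacian, the second differences of the sequence `e_0, …, e_n` vanish,
so it becomes an arithmetic progression; hence a vector with zeroth and first moments `0` lies in
the span, and the lattice is the kernel of the matrix with columns `(1, 0), …, (1, n)`.
On the other side, modulo `P_n` the value of `x_i x_j` depends only on `i + j`, so every monomial
equals the one obtained by pushing indices greedily to the right, which is a function of the degree
and the total index alone. So two monomials with the same moments agree modulo `P_n`.
-/

/-- The lattice of linear relations between the points `(1, 0), …, (1, N - 1)` of `ℤ²`: the integer
vectors whose zeroth and first moments vanish. For `N = n + 1` these points are the columns of the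
exponent matrix of the monomial parametrization of the rational normal curve of degree `n`. -/
def momentLattice (N : ℕ) : Submodule ℤ (Fin N → ℤ) :=
  LinearMap.ker (Fintype.linearCombination ℤ fun i : Fin N => ((1 : ℤ), (i : ℤ)))

theorem mem_momentLattice {N : ℕ} {w : Fin N → ℤ} :
    w ∈ momentLattice N ↔ ∑ i, w i = 0 ∧ ∑ i, w i * i = 0 := by
  simp [momentLattice, Fintype.linearCombination_apply, Prod.ext_iff, Prod.fst_sum, Prod.snd_sum]

theorem natCast_sub_natCast_mem_momentLattice_iff {N : ℕ} {u v : Fin N → ℕ} :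
    ((fun i => (u i : ℤ)) - fun i => (v i : ℤ)) ∈ momentLattice N ↔
      ∑ i, u i = ∑ i, v i ∧ ∑ i, u i * (i : ℕ) = ∑ i, v i * (i : ℕ) := by
  simp only [mem_momentLattice, Pi.sub_apply, sub_mul, Finset.sum_sub_distrib, sub_eq_zero]
  norm_cast

theorem cycLap_eq_two_nsmul_single_sub {N : ℕ} [NeZero N] (hN : 3 ≤ N) (j : Fin N) :
    cycLap N j = 2 • Pi.single j 1 - Pi.single (j + 1) 1 - Pi.single (j - 1) 1 := by
  obtain ⟨m, rfl⟩ := Nat.exists_eq_add_of_le' hN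
  have one_ne_neg_one : (1 : Fin (m + 3)) ≠ -1 := by
    rw [Ne, eq_neg_iff_add_eq_zero, Fin.ext_iff, Fin.val_add, Fin.val_one, Fin.val_zero,
      Nat.mod_eq_of_lt (by omega)]
    omega
  have succ_ne_pred : j + 1 ≠ j - 1 := by
    rwa [Ne, sub_eq_add_neg, add_right_inj]
  ext l
  have eq_succ_iff : j = l + 1 ↔ l = j - 1 := by rw [eq_sub_iff_add_eq, eq_comm]
  simp only [cycLap, eq_succ_iff, Pi.sub_apply, Pi.smul_apply, Pi.single_apply]
  split_ifs <;> simp_all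

theorem linearCombination_cycLap {M : Type*} [AddCommGroup M] {N : ℕ} [NeZero N] (hN : 3 ≤ N)
    (f : Fin N → M) (j : Fin N) :
    Fintype.linearCombination ℤ f (cycLap N j) = 2 • f j - f (j + 1) - f (j - 1) := by
  simp only [cycLap_eq_two_nsmul_single_sub hN, map_sub, map_nsmul,
    Fintype.linearCombination_apply_single, one_smul]

theorem eq_add_nsmul_of_second_difference_eq_zero {A : Type*} [AddCommGroup A] {n : ℕ}
    {f : Fin (n + 1) → A}
    (hf : ∀ j, j ≠ 0 → j ≠ Fin.last n → 2 • f j - f (j + 1) - f (j - 1) = 0) (i : Fin (n + 1)) :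
    f i = f 0 + (i : ℕ) • (f 1 - f 0) := by
  obtain ⟨k, hk⟩ := i
  induction k using Nat.twoStepInduction with
  | zero => simp
  | one =>
    have h_one : (⟨1, hk⟩ : Fin (n + 1)) = 1 := Fin.ext (Nat.mod_eq_of_lt hk).symm
    simp [h_one]
  | more k ih₀ ih₁ =>
    let j : Fin (n + 1) := ⟨k + 1, by omega⟩
    have hj₀ : j ≠ 0 := Fin.ne_of_val_ne k.succ_ne_zero
    have hjn : j ≠ Fin.last n := Fin.ne_of_val_ne (show k + 1 ≠ n by omega)
    have succ_j : j + 1 = ⟨k + 2, hk⟩ :=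
      Fin.ext (Fin.val_add_one_of_lt (Fin.lt_last_iff_ne_last.2 hjn))
    have pred_j : j - 1 = ⟨k, by omega⟩ := Fin.ext (Fin.val_sub_one_of_ne_zero hj₀)
    have hfj := hf j hj₀ hjn
    rw [succ_j, pred_j, sub_right_comm, sub_eq_zero] at hfj
    rw [← hfj, ih₀ (by omega), ih₁ (by omega)]
    module

theorem cycLap_mem_momentLattice {n : ℕ} {j : Fin (n + 1)} (hj₀ : j ≠ 0)
    (hjn : j ≠ Fin.last n) : cycLap (n + 1) j ∈ momentLattice (n + 1) := by
  have hj_pos : 0 < (j : ℕ) := Fin.pos_iff_ne_zero.2 hj₀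
  have hj_lt : (j : ℕ) < n := Fin.val_lt_last hjn
  rw [momentLattice, LinearMap.mem_ker, linearCombination_cycLap (by omega),
    Fin.val_add_one_of_lt (Fin.lt_last_iff_ne_last.2 hjn), Fin.val_sub_one_of_ne_zero hj₀]
  ext
  · simp
  · simp only [two_nsmul, Prod.snd_sub, Prod.snd_add, Prod.snd_zero]
    omega

theorem cycLap_zero_add_cycLap_last_mem_momentLattice {n : ℕ} (hn : 2 ≤ n) :
    cycLap (n + 1) 0 + cycLap (n + 1) (Fin.last n) ∈ momentLattice (n + 1) := by
  obtain ⟨m, rfl⟩ := Nat.exists_eq_add_of_le' hn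
  have last_ne_zero : Fin.last (m + 2) ≠ 0 := Fin.last_pos.ne'
  have zero_sub_one : (0 : Fin (m + 3)) - 1 = Fin.last (m + 2) := by
    rw [sub_eq_iff_eq_add, Fin.last_add_one]
  rw [momentLattice, LinearMap.mem_ker, map_add, linearCombination_cycLap (by omega),
    linearCombination_cycLap (by omega), Fin.last_add_one, zero_sub_one, zero_add,
    Fin.val_sub_one_of_ne_zero last_ne_zero]
  ext
  · simp
  · simp only [two_nsmul, Prod.snd_sub, Prod.snd_add, Prod.snd_zero, Fin.val_zero, Fin.val_last,
      Fin.val_one]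
    omega

theorem momentLattice_le_of_cycLap_mem {n : ℕ} {L : Submodule ℤ (Fin (n + 1) → ℤ)}
    (hL : ∀ j : Fin (n + 1), j ≠ 0 → j ≠ Fin.last n → cycLap (n + 1) j ∈ L) :
    momentLattice (n + 1) ≤ L := by
  intro w hw
  let e : Fin (n + 1) → (Fin (n + 1) → ℤ) ⧸ L := fun i => L.mkQ (Pi.single i 1)
  have mkQ_eq : L.mkQ = Fintype.linearCombination ℤ e :=
    LinearMap.pi_ext' fun i => LinearMap.ext_ring (by simp [e])
  have e_eq (i : Fin (n + 1)) : e i = e 0 + (i : ℕ) • (e 1 - e 0) := by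
    refine eq_add_nsmul_of_second_difference_eq_zero (fun j hj₀ hjn => ?_) i
    have hj_pos : 0 < (j : ℕ) := Fin.pos_iff_ne_zero.2 hj₀
    have hj_lt : (j : ℕ) < n := Fin.val_lt_last hjn
    rw [← linearCombination_cycLap (by omega), ← mkQ_eq, Submodule.mkQ_apply,
      Submodule.Quotient.mk_eq_zero]
    exact hL j hj₀ hjn
  obtain ⟨hw₀, hw₁⟩ := mem_momentLattice.1 hw
  rw [← Submodule.Quotient.mk_eq_zero, ← Submodule.mkQ_apply, mkQ_eq]
  calc Fintype.linearCombination ℤ e w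
      = ∑ i, w i • (e 0 + (i : ℕ) • (e 1 - e 0)) := by
        simp only [Fintype.linearCombination_apply, ← e_eq]
    _ = (∑ i, w i) • e 0 + (∑ i, w i * i) • (e 1 - e 0) := by
        simp only [smul_add, Finset.sum_add_distrib, Finset.sum_smul, mul_smul, natCast_zsmul]
    _ = 0 := by rw [hw₀, hw₁, zero_smul, zero_smul, add_zero]

theorem span_cycLap_eq_momentLattice {n : ℕ} (hn : 2 ≤ n) :
    Submodule.span ℤ
      (insert (cycLap (n + 1) (0 : Fin (n + 1)) + cycLap (n + 1) (Fin.last n))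
        { w | ∃ j : Fin (n + 1), j ≠ 0 ∧ j ≠ Fin.last n ∧ w = cycLap (n + 1) j })
      = momentLattice (n + 1) := by
  apply le_antisymm
  · rw [Submodule.span_le, Set.insert_subset_iff]
    refine ⟨cycLap_zero_add_cycLap_last_mem_momentLattice hn, ?_⟩
    rintro _ ⟨j, hj₀, hjn, rfl⟩
    exact cycLap_mem_momentLattice hj₀ hjn
  · exact momentLattice_le_of_cycLap_mem fun j hj₀ hjn =>
      Submodule.subset_span (Set.mem_insert_of_mem _ ⟨j, hj₀, hjn, rfl⟩)

/-- The `2 × 2` minors of the Hankel matrix with rows `y_0, …, y_{n-1}` and `y_1, …, y_n` vanish,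
stated without subtraction so that it makes sense in a monoid. -/
def HankelMinorsVanish {M : Type*} [Mul M] (n : ℕ) (y : ℕ → M) : Prop :=
  ∀ ⦃a b : ℕ⦄, a < n → b < n → y (a + 1) * y b = y a * y (b + 1)

/-- The product of `d` of the elements `y_0, …, y_n` with total index `S` whose indices are chosen
greedily as large as possible. If `S > d * n`, the surplus `S - d * n` is discarded. -/
def greedyProd {M : Type*} [CommMonoid M] (n : ℕ) (y : ℕ → M) : ℕ → ℕ → M
  | 0, _ => 1
  | d + 1, S => y (min n S) * greedyProd n y d (S - n)

namespace HankelMinorsVanish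

variable {M : Type*} [CommMonoid M] {n : ℕ} {y : ℕ → M}

theorem add_mul_eq_mul_add (hy : HankelMinorsVanish n y) {a b : ℕ} (k : ℕ) (ha : a + k ≤ n)
    (hb : b + k ≤ n) : y (a + k) * y b = y a * y (b + k) := by
  induction k generalizing b with
  | zero => rfl
  | succ k ih =>
    calc y (a + k + 1) * y b = y (a + k) * y (b + 1) := hy (by omega) (by omega)
      _ = y a * y (b + 1 + k) := ih (by omega) (by omega)
      _ = y a * y (b + (k + 1)) := by rw [add_assoc, add_comm 1 k]

theorem mul_eq_mul (hy : HankelMinorsVanish n y) {a b c d : ℕ} (ha : a ≤ n) (hb : b ≤ n)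
    (hc : c ≤ n) (hd : d ≤ n) (h : a + b = c + d) : y a * y b = y c * y d := by
  wlog hca : c ≤ a generalizing a b c d
  · exact (this hc hd ha hb h.symm (by omega)).symm
  obtain ⟨k, rfl⟩ := Nat.exists_eq_add_of_le hca
  obtain rfl : d = b + k := by omega
  exact hy.add_mul_eq_mul_add k ha hd

theorem mul_greedyProd (hy : HankelMinorsVanish n y) {a : ℕ} (ha : a ≤ n) {d S : ℕ}
    (hS : S ≤ d * n) : y a * greedyProd n y d S = greedyProd n y (d + 1) (a + S) := by
  induction d generalizing a S with
  | zero =>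
    obtain rfl : S = 0 := by simpa using hS
    simp [greedyProd, ha]
  | succ d ih =>
    rw [add_one_mul] at hS
    set r := a + min n S - min n (a + S)
    calc y a * (y (min n S) * greedyProd n y d (S - n))
        = y (min n (a + S)) * (y r * greedyProd n y d (S - n)) := by
          rw [← mul_assoc, ← mul_assoc, hy.mul_eq_mul ha _ _ (d := r)] <;> omega
      _ = y (min n (a + S)) * greedyProd n y (d + 1) (r + (S - n)) := by
          rw [ih (by omega) (by omega)]
      _ = greedyProd n y (d + 2) (a + S) := by
          rw [greedyProd.eq_def _ _ (d + 2), show r + (S - n) = a + S - n by omega]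

theorem pow_mul_greedyProd (hy : HankelMinorsVanish n y) {a : ℕ} (ha : a ≤ n) (k : ℕ) {d S : ℕ}
    (hS : S ≤ d * n) :
    y a ^ k * greedyProd n y d S = greedyProd n y (k + d) (k * a + S) := by
  induction k with
  | zero => simp
  | succ k ih =>
    have hkS : k * a + S ≤ (k + d) * n := by
      rw [add_mul]
      gcongr
    rw [pow_succ', mul_assoc, ih, hy.mul_greedyProd ha hkS]
    congr 1 <;> ring

theorem prod_pow_eq_greedyProd (hy : HankelMinorsVanish n y) {ι : Type*} (T : Finset ι)
    {p : ι → ℕ} (hp : ∀ i ∈ T, p i ≤ n) (u : ι → ℕ) :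
    ∏ i ∈ T, y (p i) ^ u i = greedyProd n y (∑ i ∈ T, u i) (∑ i ∈ T, u i * p i) := by
  classical
  induction T using Finset.induction_on with
  | empty => rfl
  | insert i T hi ih =>
    obtain ⟨hpi, hpT⟩ := Finset.forall_mem_insert .. |>.1 hp
    have hT : ∑ i ∈ T, u i * p i ≤ (∑ i ∈ T, u i) * n := by
      rw [Finset.sum_mul]
      gcongr with i hiT
      exact hpT i hiT
    rw [Finset.prod_insert hi, Finset.sum_insert hi, Finset.sum_insert hi, ih hpT,
      hy.pow_mul_greedyProd hpi _ hT]

end HankelMinorsVanish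

section Ideal

variable {n : ℕ} {K : Type*} [Field K]

theorem val_xIdx {m : ℕ} (hm : m ≤ n + 1) : (xIdx n m : ℕ) = m - 1 :=
  Nat.mod_eq_of_lt (by omega)

theorem xIdx_val_add_one (i : Fin (n + 1)) : xIdx n (i + 1) = i :=
  Fin.ext (val_xIdx (by omega))

theorem hankelMinorsVanish_mk_Pideal :
    HankelMinorsVanish n fun k => Ideal.Quotient.mk (Pideal n K) (X (xIdx n (k + 1))) := by
  intro a b ha hb
  wlog hab : a ≤ b generalizing a b
  · rw [mul_comm, ← this hb ha (by omega), mul_comm]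
  obtain rfl | hab := hab.eq_or_lt
  · exact mul_comm _ _
  simp only [← map_mul]
  exact Ideal.Quotient.eq.2
    (Ideal.subset_span ⟨a + 2, b + 1, by omega, by omega, by omega, rfl⟩)

theorem latticeIdeal_momentLattice_le_Pideal :
    latticeIdeal (n + 1) K (momentLattice (n + 1)) ≤ Pideal n K := by
  refine Ideal.span_le.2 ?_
  rintro _ ⟨u, v, huv, rfl⟩
  obtain ⟨hcard, hsum⟩ := natCast_sub_natCast_mem_momentLattice_iff.1 huv
  have mk_monomial (w : Fin (n + 1) → ℕ) :
      Ideal.Quotient.mk (Pideal n K) (∏ i, X i ^ w i) =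
        greedyProd n (fun k => Ideal.Quotient.mk (Pideal n K) (X (xIdx n (k + 1))))
          (∑ i, w i) (∑ i, w i * (i : ℕ)) := by
    rw [← hankelMinorsVanish_mk_Pideal.prod_pow_eq_greedyProd _ fun i _ => i.is_le]
    simp only [map_prod, map_pow, xIdx_val_add_one]
  exact Ideal.Quotient.eq.1 (by rw [mk_monomial, mk_monomial, hcard, hsum])

theorem X_mul_X_sub_X_mul_X_mem_latticeIdeal {N : ℕ} {a b c d : Fin N}
    (h : (a + b : ℕ) = c + d) :
    X a * X b - X c * X d ∈ latticeIdeal N K (momentLattice N) := by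
  refine Ideal.subset_span ⟨Pi.single a 1 + Pi.single b 1, Pi.single c 1 + Pi.single d 1, ?_, ?_⟩
  · rw [natCast_sub_natCast_mem_momentLattice_iff]
    simpa [Finset.sum_add_distrib, add_mul, Pi.single_apply] using h
  · simp only [Pi.add_apply, Pi.single_apply, pow_add, Finset.prod_mul_distrib, pow_ite, pow_one,
      pow_zero, Finset.prod_ite_eq', Finset.mem_univ, if_true]

theorem Pideal_le_latticeIdeal_momentLattice :
    Pideal n K ≤ latticeIdeal (n + 1) K (momentLattice (n + 1)) := by
  refine Ideal.span_le.2 ?_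
  rintro _ ⟨i, j, hi, hij, hj, rfl⟩
  apply X_mul_X_sub_X_mul_X_mem_latticeIdeal
  rw [val_xIdx, val_xIdx, val_xIdx, val_xIdx] <;> omega

theorem latticeIdeal_momentLattice :
    latticeIdeal (n + 1) K (momentLattice (n + 1)) = Pideal n K :=
  le_antisymm latticeIdeal_momentLattice_le_Pideal Pideal_le_latticeIdeal_momentLattice

end Ideal

/-- The lattice ideal of the lattice `L ⊆ ℤ^{n+1}` generated by
`b_1 + b_{n+1}, b_2, …, b_n` (rows of the Laplacian of the cycle `C_{n+1}`) equals `P_n`: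
the rational normal curve is the toppling ideal of the parcycle
`(C_{n+1}, {{1, n+1}, {2}, …, {n}})`. -/
theorem statement_18 (K : Type*) [Field K] (n : ℕ) (hn : 2 ≤ n) :
    latticeIdeal (n + 1) K (Submodule.span ℤ
      (insert (cycLap (n + 1) (0 : Fin (n + 1)) + cycLap (n + 1) (Fin.last n))
        { w | ∃ j : Fin (n + 1), j ≠ 0 ∧ j ≠ Fin.last n ∧ w = cycLap (n + 1) j }))
      = Pideal n K := by
  rw [span_cycLap_eq_momentLattice hn, latticeIdeal_momentLattice]
end
end
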